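/- Let p be a prime number. There exist nonzero a₀, b₀ ∈ ℚ_p such that D := ℍ[ℚ_p,a₀,b₀] is a division ring, and for all nonzero a, b ∈ ℚ_p, the quaternion algebra ℍ[ℚ_p,a,b] is isomorphic as a ℚ_p-algebra either to the matrix algebra M₂(ℚ_p) or to D, but not to both (D is not isomorphic to M₂(ℚ_p)). In other words, there are exactly two quaternion algebras over ℚ_p up to isomorphism. -/

import Mathlib

open Quaternion

/-- A ring is a division ring if it is nontrivial and every nonzero element is invertible. -/
def IsDivisionRingPred (A : Type*) [Ring A] : Prop :=
  (1 : A) ≠ 0 ∧ ∀ x : A, x ≠ 0 → IsUnit x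

/-!
The algebra `ℍ[K,a,b]` is `ℍ[K,c,d]` as soon as it contains anticommuting pure quaternions with
squares `c` and `d`, and a pure quaternion with square `c ≠ 0` always has an anticommuting partner.
So `ℍ[K,a,b] ≃ ℍ[K,c,d]` for some `d` whenever `c` is a value of `a x² + b y² - a b z²`.

Choose `c : ℤ_[p]` such that `T² + T + c` has no root modulo `p` and let `u = 1 - 4 c`: then
`ℚ_[p](√u)` is the unramified quadratic extension, with norm form `x² + x y + c y²` on its integers.
This form is anisotropic modulo `p`, so its nonzero values on `ℚ_[p]` have even valuation; hence `p`
is not a norm and `ℍ[ℚ_[p],u,p]` is a division ring. It is also smooth and surjective modulo `p`,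
so by Hensel's lemma every unit is a norm and every `d ≠ 0` is a norm or `p` times a norm.

For all nonzero `a` and `b` the form `a x² + b y² - a b z²` represents a unit congruent to `1`
modulo `4`, which is a square or `u` times a square. In the first case the algebra is split, in the
second it is some `ℍ[ℚ_[p],u,d]`, and multiplying `d` by a norm does not change the algebra.
-/

namespace PadicQuaternion

section PureForm

/-- The square of the pure quaternion `x i + y j + z k` in `ℍ[R,a,b]`, as a ternary quadratic form
in the coordinates `x`, `y`, `z`. -/
def pureSq {R : Type*} [CommRing R] (a b x y z : R) : R := a * x ^ 2 + b * y ^ 2 - a * b * z ^ 2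

variable {R : Type*} [CommRing R]

lemma pureSq_swap (a b x y z : R) : pureSq a b x y z = pureSq b a y x z := by
  unfold pureSq; ring

lemma pureSq_mul_sq (a b s t x y z : R) :
    pureSq (a * s ^ 2) (b * t ^ 2) x y z = pureSq a b (s * x) (t * y) (s * t * z) := by
  unfold pureSq; ring

lemma pureSq_smul (a b t x y z : R) :
    pureSq a b (t * x) (t * y) (t * z) = t ^ 2 * pureSq a b x y z := by
  unfold pureSq; ring

end PureForm

section Field

variable {K : Type*} [Field K] {a b : K}

section Hom

variable [NeZero (2 : K)] {A : Type*} [Ring A] [Algebra K A] [Nontrivial A]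

lemma re_eq_zero_of_map_eq_zero (ha : a ≠ 0) (hb : b ≠ 0) (f : ℍ[K,a,b] →ₐ[K] A)
    {q : ℍ[K,a,b]} (hq : f q = 0) : q.re = 0 := by
  have trace_formula : (2 * 2 * a * b * q.re) • (1 : ℍ[K,a,b]) =
      (a * b) • q + b • (⟨0, 1, 0, 0⟩ * q * ⟨0, 1, 0, 0⟩)
        + a • (⟨0, 0, 1, 0⟩ * q * ⟨0, 0, 1, 0⟩) - ⟨0, 0, 0, 1⟩ * q * ⟨0, 0, 0, 1⟩ := by
    ext <;> simp <;> ring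
  have map_trace := congrArg f trace_formula
  simp only [map_sub, map_add, map_smul, map_mul, map_one, hq, smul_zero, mul_zero, zero_mul,
    add_zero, sub_zero] at map_trace
  simpa [ha, hb, NeZero.ne (2 : K)] using map_trace

lemma algHom_injective (ha : a ≠ 0) (hb : b ≠ 0) (f : ℍ[K,a,b] →ₐ[K] A) :
    Function.Injective f := by
  refine (injective_iff_map_eq_zero f).2 fun q hq => ?_
  have re_mul (r : ℍ[K,a,b]) : (q * r).re = 0 :=
    re_eq_zero_of_map_eq_zero ha hb f (by rw [map_mul, hq, zero_mul])
  ext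
  · simpa using re_mul 1
  · simpa [ha] using re_mul ⟨0, 1, 0, 0⟩
  · simpa [hb] using re_mul ⟨0, 0, 1, 0⟩
  · simpa [ha, hb] using re_mul ⟨0, 0, 0, 1⟩

lemma nonempty_algEquiv_of_basis (ha : a ≠ 0) (hb : b ≠ 0) (hA : Module.finrank K A = 4)
    (B : QuaternionAlgebra.Basis A a 0 b) : Nonempty (ℍ[K,a,b] ≃ₐ[K] A) := by
  have : FiniteDimensional K A := Module.finite_of_finrank_pos (by omega)
  have inj := algHom_injective ha hb B.liftHom
  have surj := (LinearMap.injective_iff_surjective_of_finrank_eq_finrank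
    (f := B.liftHom.toLinearMap) (by rw [hA, QuaternionAlgebra.finrank_eq_four])).1 inj
  exact ⟨AlgEquiv.ofBijective B.liftHom ⟨inj, surj⟩⟩

end Hom

section Isomorphisms

variable [NeZero (2 : K)]

lemma nonempty_algEquiv_of_orthogonal {x y z x' y' z' : K}
    (hc : pureSq a b x y z ≠ 0) (hd : pureSq a b x' y' z' ≠ 0)
    (orth : a * x * x' + b * y * y' - a * b * z * z' = 0) :
    Nonempty (ℍ[K,a,b] ≃ₐ[K] ℍ[K,pureSq a b x y z,pureSq a b x' y' z']) := by
  let i : ℍ[K,a,b] := ⟨0, x, y, z⟩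
  let j : ℍ[K,a,b] := ⟨0, x', y', z'⟩
  have hij : j * i = -(i * j) := by
    ext <;> simp only [i, j, QuaternionAlgebra.mk_mul_mk, QuaternionAlgebra.neg_mk]
    · linear_combination 2 * orth
    all_goals ring
  obtain ⟨e⟩ := nonempty_algEquiv_of_basis hc hd (QuaternionAlgebra.finrank_eq_four a 0 b)
    { i := i, j := j, k := i * j
      i_mul_i := by ext <;> simp [i, pureSq] <;> ring
      j_mul_j := by ext <;> simp [j, pureSq] <;> ring
      i_mul_j := rfl
      j_mul_i := by simp [hij] }
  exact ⟨e.symm⟩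

lemma exists_orthogonal_pureSq_ne_zero (ha : a ≠ 0) (hb : b ≠ 0) {x y z : K}
    (hc : pureSq a b x y z ≠ 0) :
    ∃ x' y' z', a * x * x' + b * y * y' - a * b * z * z' = 0 ∧ pureSq a b x' y' z' ≠ 0 := by
  by_contra! h
  -- The candidates are, up to scalars, the commutators of `x i + y j + z k` with `i`, `j` and `k`.
  have sq_i := h 0 (a * z) y (by ring)
  have sq_j := h (b * z) 0 x (by ring)
  have sq_k := h (b * y) (-a * x) 0 (by ring)
  have : 2 * a * b * pureSq a b x y z = 0 := by
    unfold pureSq at *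
    linear_combination sq_k - b * sq_i - a * sq_j
  simp [ha, hb, hc, NeZero.ne (2 : K)] at this

lemma exists_algEquiv_pureSq (ha : a ≠ 0) (hb : b ≠ 0) {x y z : K} (hc : pureSq a b x y z ≠ 0) :
    ∃ d ≠ 0, Nonempty (ℍ[K,a,b] ≃ₐ[K] ℍ[K,pureSq a b x y z,d]) := by
  obtain ⟨x', y', z', orth, hd⟩ := exists_orthogonal_pureSq_ne_zero ha hb hc
  exact ⟨_, hd, nonempty_algEquiv_of_orthogonal hc hd orth⟩

lemma nonempty_algEquiv_mul_norm (ha : a ≠ 0) (hb : b ≠ 0) {x y : K}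
    (hxy : x ^ 2 - a * y ^ 2 ≠ 0) :
    Nonempty (ℍ[K,a,b] ≃ₐ[K] ℍ[K,a,b * (x ^ 2 - a * y ^ 2)]) := by
  have sq_i : pureSq a b 1 0 0 = a := by simp [pureSq]
  have sq_j : pureSq a b 0 x y = b * (x ^ 2 - a * y ^ 2) := by unfold pureSq; ring
  have e := nonempty_algEquiv_of_orthogonal (a := a) (b := b) (x := 1) (y := 0) (z := 0)
    (x' := 0) (y' := x) (z' := y) (by rwa [sq_i]) (by rw [sq_j]; exact mul_ne_zero hb hxy)
    (by ring)
  rwa [sq_i, sq_j] at e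

lemma nonempty_algEquiv_matrix_of_one (hb : b ≠ 0) :
    Nonempty (ℍ[K,1,b] ≃ₐ[K] Matrix (Fin 2) (Fin 2) K) := by
  refine nonempty_algEquiv_of_basis one_ne_zero hb (by simp [Module.finrank_matrix])
    { i := !![1, 0; 0, -1], j := !![0, b; 1, 0], k := !![0, b; -1, 0]
      i_mul_i := ?_, j_mul_j := ?_, i_mul_j := ?_, j_mul_i := ?_ } <;>
  · ext m n
    fin_cases m <;> fin_cases n <;> simp

lemma nonempty_algEquiv_matrix_of_pureSq_eq_one (ha : a ≠ 0) (hb : b ≠ 0) {x y z : K}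
    (h : pureSq a b x y z = 1) : Nonempty (ℍ[K,a,b] ≃ₐ[K] Matrix (Fin 2) (Fin 2) K) := by
  obtain ⟨d, hd, ⟨e⟩⟩ := exists_algEquiv_pureSq ha hb (h ▸ one_ne_zero)
  rw [h] at e
  exact (nonempty_algEquiv_matrix_of_one hd).map e.trans

lemma nonempty_algEquiv_matrix_of_norm (ha : a ≠ 0) {x y : K} (hxy : x ^ 2 - a * y ^ 2 ≠ 0) :
    Nonempty (ℍ[K,a,x ^ 2 - a * y ^ 2] ≃ₐ[K] Matrix (Fin 2) (Fin 2) K) := by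
  set n := x ^ 2 - a * y ^ 2 with hn
  refine nonempty_algEquiv_matrix_of_pureSq_eq_one ha hxy (x := 0) (y := x / n) (z := y / n) ?_
  unfold pureSq
  field_simp
  rw [hn]; ring

end Isomorphisms

section DivisionRing

lemma isDivisionRingPred_of_anisotropic
    (h : ∀ x y z w : K, x ^ 2 - a * y ^ 2 = b * (z ^ 2 - a * w ^ 2) →
      x = 0 ∧ y = 0 ∧ z = 0 ∧ w = 0) : IsDivisionRingPred ℍ[K,a,b] := by
  refine ⟨one_ne_zero, fun q hq => ?_⟩
  set n := q.re ^ 2 - a * q.imI ^ 2 - b * (q.imJ ^ 2 - a * q.imK ^ 2) with hn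
  have n_ne_zero : n ≠ 0 := fun n_eq_zero => by
    obtain ⟨h_re, h_i, h_j, h_k⟩ := h _ _ _ _ (sub_eq_zero.1 n_eq_zero)
    exact hq (QuaternionAlgebra.ext h_re h_i h_j h_k)
  have mul_star : q * star q = n • 1 := by ext <;> simp [hn] <;> ring
  have star_mul : star q * q = n • 1 := by ext <;> simp [hn] <;> ring
  refine ⟨⟨q, n⁻¹ • star q, ?_, ?_⟩, rfl⟩
  · rw [mul_smul_comm, mul_star, inv_smul_smul₀ n_ne_zero]
  · rw [smul_mul_assoc, star_mul, inv_smul_smul₀ n_ne_zero]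

lemma exists_sq_sub_mul_sq_eq_of_isSquare [NeZero (2 : K)] (ha : a ≠ 0) (h : IsSquare a) (b : K) :
    ∃ x y, x ^ 2 - a * y ^ 2 = b := by
  obtain ⟨s, rfl⟩ := h
  have hs : s ≠ 0 := left_ne_zero_of_mul ha
  have h2 : (2 : K) ≠ 0 := NeZero.ne _
  refine ⟨(b + 1) / 2, (b - 1) / (2 * s), ?_⟩
  field_simp
  ring

lemma eq_zero_of_sq_sub_mul_sq_eq_zero (ha : ¬ IsSquare a) {x y : K}
    (h : x ^ 2 - a * y ^ 2 = 0) : x = 0 ∧ y = 0 := by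
  have hy : y = 0 := by
    by_contra hy
    exact ha ⟨x / y, by field_simp; linear_combination -h⟩
  simpa [hy] using h

lemma isDivisionRingPred_of_not_norm [NeZero (2 : K)] (ha : a ≠ 0)
    (hb : ∀ x y, x ^ 2 - a * y ^ 2 ≠ b) : IsDivisionRingPred ℍ[K,a,b] := by
  have not_square : ¬ IsSquare a := fun h =>
    let ⟨x, y, hxy⟩ := exists_sq_sub_mul_sq_eq_of_isSquare ha h b
    hb x y hxy
  refine isDivisionRingPred_of_anisotropic fun x y z w h => ?_
  have norm_zw : z ^ 2 - a * w ^ 2 = 0 := by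
    by_contra hzw
    -- Norms are closed under division, so `b` would be the norm of `(x + y√a) / (z + w√a)`.
    refine hb ((x * z - a * y * w) / (z ^ 2 - a * w ^ 2)) ((y * z - x * w) / (z ^ 2 - a * w ^ 2)) ?_
    field_simp
    linear_combination (z ^ 2 - a * w ^ 2) * h
  have norm_xy : x ^ 2 - a * y ^ 2 = 0 := by rw [h, norm_zw, mul_zero]
  obtain ⟨hx, hy⟩ := eq_zero_of_sq_sub_mul_sq_eq_zero not_square norm_xy
  exact ⟨hx, hy, eq_zero_of_sq_sub_mul_sq_eq_zero not_square norm_zw⟩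

end DivisionRing

end Field

lemma isEmpty_ringEquiv_matrix {A : Type*} [Ring A] (hA : IsDivisionRingPred A)
    (n R : Type*) [Fintype n] [Nontrivial n] [Semiring R] [Nontrivial R] :
    IsEmpty (A ≃+* Matrix n n R) := by
  classical
  refine ⟨fun e => ?_⟩
  obtain ⟨i, j, hij⟩ := exists_pair_ne n
  set E : Matrix n n R := Matrix.single i j 1 with hE
  have E_ne_zero : E ≠ 0 := fun h => one_ne_zero (α := R) (by simpa [hE] using congr_fun₂ h i j)
  have E_sq : E * E = 0 := Matrix.single_mul_single_of_ne _ _ _ _ hij.symm _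
  have unit_E : IsUnit E := by
    simpa using (hA.2 (e.symm E) (by simpa using E_ne_zero)).map e
  exact E_ne_zero (unit_E.mul_left_cancel (by rw [E_sq, mul_zero]))

section ResidueField

/-- The polynomial `T² + T + c` has no root in `F`. In every characteristic, including `2`, it then
generates a quadratic extension of `F`, with norm form `x² + x y + c y²` in the basis `1`, `-T`. -/
def RootFree {F : Type*} [Field F] (c : F) : Prop := ∀ t : F, t ^ 2 + t + c ≠ 0

lemma exists_rootFree (F : Type*) [Field F] [Finite F] : ∃ c : F, RootFree c := by
  have not_injective : ¬ Function.Injective fun t : F => t ^ 2 + t := fun h =>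
    neg_ne_zero.2 (one_ne_zero (α := F)) (h (by simp))
  rw [Finite.injective_iff_surjective, Function.Surjective] at not_injective
  push Not at not_injective
  obtain ⟨d, hd⟩ := not_injective
  exact ⟨-d, fun t ht => hd t (by linear_combination ht)⟩

namespace RootFree

variable {F : Type*} [Field F] {c : F}

lemma one_sub_four_mul_ne_zero (hc : RootFree c) : 1 - 4 * c ≠ 0 := fun h =>
  hc (-2 * c) (by linear_combination -c * h)

lemma eq_zero_of_form_eq_zero (hc : RootFree c) {x y : F} (h : x ^ 2 + x * y + c * y ^ 2 = 0) :
    x = 0 ∧ y = 0 := by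
  have hy : y = 0 := by
    by_contra hy
    exact hc (x / y) (by field_simp; linear_combination h)
  simpa [hy] using h

lemma exists_form_eq [Finite F] (hc : RootFree c) (d : F) :
    ∃ x y, x ^ 2 + x * y + c * y ^ 2 = d := by
  have := Fintype.ofFinite F
  by_cases h2 : ringChar F = 2
  · obtain ⟨x, rfl⟩ := FiniteField.isSquare_of_char_two h2 d
    exact ⟨x, 0, by ring⟩
  · obtain ⟨x, y, h⟩ := FiniteField.exists_root_sum_quadratic
      (f := .X ^ 2 - .C d) (g := .C (-(1 - 4 * c)) * .X ^ 2)
      (Polynomial.degree_X_pow_sub_C two_pos _)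
      (Polynomial.degree_C_mul_X_pow 2 (neg_ne_zero.2 hc.one_sub_four_mul_ne_zero))
      (FiniteField.odd_card_of_char_ne_two h2)
    simp only [Polynomial.eval_sub, Polynomial.eval_mul, Polynomial.eval_pow, Polynomial.eval_X,
      Polynomial.eval_C] at h
    exact ⟨x - y, 2 * y, by linear_combination h⟩

lemma not_isSquare_one_sub_four_mul (hc : RootFree c) (h2 : (2 : F) ≠ 0) :
    ¬ IsSquare (1 - 4 * c) := by
  rintro ⟨r, hr⟩
  refine hc ((r - 1) / 2) ?_
  field_simp
  linear_combination -hr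

end RootFree

lemma isSquare_mul_of_not_isSquare {F : Type*} [Field F] [Finite F] {u v : F}
    (hu : ¬ IsSquare u) (hv : ¬ IsSquare v) : IsSquare (u * v) := by
  classical
  have := Fintype.ofFinite F
  have huv : u * v ≠ 0 :=
    mul_ne_zero (by rintro rfl; exact hu .zero) (by rintro rfl; exact hv .zero)
  rw [← quadraticChar_one_iff_isSquare huv, map_mul, quadraticChar_neg_one_iff_not_isSquare.2 hu,
    quadraticChar_neg_one_iff_not_isSquare.2 hv, neg_one_mul, neg_neg]

lemma RootFree.exists_eq_mul {p : ℕ} [Fact p.Prime] {c c' : ZMod p}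
    (hc : RootFree c) (hc' : RootFree c') : ∃ t, (1 - 4 * c) * (t ^ 2 + t) = c - c' := by
  by_cases hp : p = 2
  · subst hp
    have eq_one {d : ZMod 2} (hd : RootFree d) : d = 1 :=
      Fin.eq_one_of_ne_zero d (by rintro rfl; exact hd 0 rfl)
    exact ⟨0, by simp [eq_one hc, eq_one hc']⟩
  · have h2 : (2 : ZMod p) ≠ 0 := by
      have : Fact (2 < p) := ⟨(Fact.out : p.Prime).two_le.lt_of_ne' hp⟩
      exact Ring.two_ne_zero (by rwa [ZMod.ringChar_zmod_n])
    obtain ⟨r, hr⟩ := isSquare_mul_of_not_isSquare (hc.not_isSquare_one_sub_four_mul h2)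
      (hc'.not_isSquare_one_sub_four_mul h2)
    have hu := hc.one_sub_four_mul_ne_zero
    refine ⟨(r / (1 - 4 * c) - 1) / 2, ?_⟩
    field_simp
    linear_combination -hr

end ResidueField

section Padic

open PadicInt (toZMod)

variable {p : ℕ} [Fact p.Prime]

section Hensel

lemma toZMod_ne_zero_iff {x : ℤ_[p]} : toZMod x ≠ 0 ↔ IsUnit x := by
  rw [Ne, ← RingHom.mem_ker, PadicInt.ker_toZMod, IsLocalRing.notMem_maximalIdeal]

lemma exists_quadratic_root (α β γ : ℤ_[p]) {t : ZMod p}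
    (root : toZMod α * t ^ 2 + toZMod β * t + toZMod γ = 0)
    (simple : 2 * toZMod α * t + toZMod β ≠ 0) : ∃ x, α * x ^ 2 + β * x + γ = 0 := by
  obtain ⟨x₀, rfl⟩ := ZMod.ringHom_surjective toZMod t
  let F : Polynomial ℤ_[p] := .C α * .X ^ 2 + .C β * .X + .C γ
  have eval_F (x : ℤ_[p]) : F.aeval x = α * x ^ 2 + β * x + γ := by simp [F]
  have norm_eval : ‖F.aeval x₀‖ < 1 := by
    rw [← PadicInt.mem_nonunits, mem_nonunits_iff, ← toZMod_ne_zero_iff, not_not, eval_F]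
    simpa using root
  have norm_derivative : ‖F.derivative.aeval x₀‖ = 1 := by
    have eval_derivative : F.derivative.aeval x₀ = 2 * α * x₀ + β := by simp [F]; ring
    rw [← PadicInt.isUnit_iff, ← toZMod_ne_zero_iff, eval_derivative]
    simpa only [map_add, map_mul, map_ofNat] using simple
  obtain ⟨x, hx, -⟩ := hensels_lemma (F := F) (a := x₀) (by rwa [norm_derivative, one_pow])
  exact ⟨x, by rw [← eval_F, hx]⟩

end Hensel

section UnramifiedNorm

variable {c : ℤ_[p]}

lemma toZMod_one_sub_four_mul (c : ℤ_[p]) : toZMod (1 - 4 * c) = 1 - 4 * toZMod c := by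
  rw [map_sub, map_mul, map_one, map_ofNat]

lemma coe_one_sub_four_mul (c : ℤ_[p]) : ((1 - 4 * c : ℤ_[p]) : ℚ_[p]) = 1 - 4 * c := by
  push_cast
  rfl

lemma coe_one_sub_four_mul_ne_zero (hc : RootFree (toZMod c)) : (1 - 4 * c : ℚ_[p]) ≠ 0 := by
  have unit : IsUnit (1 - 4 * c) :=
    toZMod_ne_zero_iff.1 (by simpa only [toZMod_one_sub_four_mul] using hc.one_sub_four_mul_ne_zero)
  rw [← coe_one_sub_four_mul, PadicInt.coe_ne_zero]
  exact unit.ne_zero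

lemma norm_form_eq_one_of_isUnit (hc : RootFree (toZMod c)) {x y : ℤ_[p]}
    (h : IsUnit x ∨ IsUnit y) : ‖x ^ 2 + x * y + c * y ^ 2‖ = 1 := by
  rw [← PadicInt.isUnit_iff, ← toZMod_ne_zero_iff]
  intro h0
  obtain ⟨hx, hy⟩ := hc.eq_zero_of_form_eq_zero (by simpa using h0)
  exact h.elim (toZMod_ne_zero_iff.2 · hx) (toZMod_ne_zero_iff.2 · hy)

lemma norm_form_eq_max_sq (hc : RootFree (toZMod c)) (x y : ℚ_[p]) :
    ‖x ^ 2 + x * y + c * y ^ 2‖ = max ‖x‖ ‖y‖ ^ 2 := by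
  rcases le_total ‖x‖ ‖y‖ with hle | hle
  · rcases eq_or_ne y 0 with rfl | hy
    · simp_all
    obtain ⟨t, ht⟩ : ∃ t : ℤ_[p], x = t * y :=
      ⟨⟨x / y, by rw [norm_div]; exact div_le_one_of_le₀ hle (norm_nonneg _)⟩, by field_simp⟩
    have factor : x ^ 2 + x * y + c * y ^ 2 = (t ^ 2 + t * 1 + c * 1 ^ 2 : ℤ_[p]) * y ^ 2 := by
      rw [ht]; push_cast; ring
    rw [factor, norm_mul, ← PadicInt.norm_def,
      norm_form_eq_one_of_isUnit hc (.inr isUnit_one), one_mul, norm_pow, max_eq_right hle]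
  · rcases eq_or_ne x 0 with rfl | hx
    · simp_all
    obtain ⟨t, ht⟩ : ∃ t : ℤ_[p], y = t * x :=
      ⟨⟨y / x, by rw [norm_div]; exact div_le_one_of_le₀ hle (norm_nonneg _)⟩, by field_simp⟩
    have factor : x ^ 2 + x * y + c * y ^ 2 = (1 ^ 2 + 1 * t + c * t ^ 2 : ℤ_[p]) * x ^ 2 := by
      rw [ht]; push_cast; ring
    rw [factor, norm_mul, ← PadicInt.norm_def,
      norm_form_eq_one_of_isUnit hc (.inl isUnit_one), one_mul, norm_pow, max_eq_left hle]

lemma norm_sq_ne_norm_p (z : ℚ_[p]) : ‖z‖ ^ 2 ≠ ‖(p : ℚ_[p])‖ := by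
  intro h
  have hp : 1 < (p : ℝ) := by exact_mod_cast (Fact.out : p.Prime).one_lt
  have hz : z ≠ 0 := by
    rintro rfl
    rw [norm_zero, zero_pow two_ne_zero, Padic.norm_p] at h
    exact (inv_pos.2 (one_pos.trans hp)).ne h
  rw [Padic.norm_eq_zpow_neg_valuation hz, Padic.norm_p, ← zpow_natCast, ← zpow_mul,
    ← zpow_neg_one] at h
  have := zpow_right_injective₀ (by positivity) hp.ne' h
  omega

lemma sq_sub_mul_sq_ne_p (hc : RootFree (toZMod c)) (x y : ℚ_[p]) :
    x ^ 2 - (1 - 4 * c) * y ^ 2 ≠ p := by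
  intro h
  have norm_eq : max ‖x - y‖ ‖2 * y‖ ^ 2 = ‖(p : ℚ_[p])‖ := by
    rw [← norm_form_eq_max_sq hc, ← h]
    congr 1
    ring
  rcases max_choice ‖x - y‖ ‖2 * y‖ with hmax | hmax <;>
  · rw [hmax] at norm_eq
    exact norm_sq_ne_norm_p _ norm_eq

lemma exists_form_eq_of_isUnit (hc : RootFree (toZMod c)) {v : ℤ_[p]} (hv : IsUnit v) :
    ∃ x y, x ^ 2 + x * y + c * y ^ 2 = v := by
  obtain ⟨x₀, y₀, h₀⟩ := hc.exists_form_eq (toZMod v)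
  obtain ⟨x, rfl⟩ := ZMod.ringHom_surjective toZMod x₀
  obtain ⟨y, rfl⟩ := ZMod.ringHom_surjective toZMod y₀
  by_cases hx : 2 * toZMod x + toZMod y = 0
  · have hy : 2 * toZMod c * toZMod y + toZMod x ≠ 0 := by
      intro hy
      have x_eq : toZMod x = 0 := by
        refine (mul_eq_zero.1 ?_).resolve_left hc.one_sub_four_mul_ne_zero
        linear_combination hy - 2 * toZMod c * hx
      have y_eq : toZMod y = 0 := by simpa [x_eq] using hx
      exact toZMod_ne_zero_iff.2 hv (by simpa [x_eq, y_eq] using h₀.symm)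
    obtain ⟨y', h⟩ := exists_quadratic_root c x (x ^ 2 - v) (t := toZMod y)
      (by rw [map_sub, map_pow]; linear_combination h₀) hy
    exact ⟨x, y', by linear_combination h⟩
  · obtain ⟨x', h⟩ := exists_quadratic_root 1 y (c * y ^ 2 - v) (t := toZMod x)
      (by rw [map_sub, map_mul, map_pow, map_one]; linear_combination h₀)
      (by rwa [map_one, mul_one])
    exact ⟨x', y, by linear_combination h⟩

lemma exists_eq_unit_mul_sq {d : ℚ_[p]} (hd : d ≠ 0) :
    ∃ v : ℤ_[p]ˣ, ∃ s ≠ 0, d = v * s ^ 2 ∨ d = p * v * s ^ 2 := by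
  have hp : (p : ℚ_[p]) ≠ 0 := by exact_mod_cast (Fact.out : p.Prime).ne_zero
  obtain ⟨n, v, rfl⟩ : ∃ (n : ℤ) (v : ℤ_[p]ˣ), d = v * (p : ℚ_[p]) ^ n := by
    have norm_unit : ‖d * (p : ℚ_[p]) ^ (-d.valuation)‖ = 1 := by
      have hp' : (p : ℝ) ≠ 0 := by exact_mod_cast (Fact.out : p.Prime).ne_zero
      rw [norm_mul, Padic.norm_eq_zpow_neg_valuation hd, Padic.norm_p_zpow, neg_neg,
        ← zpow_add₀ hp', neg_add_cancel, zpow_zero]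
    refine ⟨d.valuation, PadicInt.mkUnits norm_unit, ?_⟩
    rw [PadicInt.mkUnits_eq, zpow_neg, inv_mul_cancel_right₀ (zpow_ne_zero _ hp)]
  obtain ⟨k, rfl | rfl⟩ := n.even_or_odd'
  · exact ⟨v, p ^ k, zpow_ne_zero k hp, .inl (by rw [mul_comm 2 k, zpow_mul, zpow_ofNat])⟩
  · refine ⟨v, p ^ k, zpow_ne_zero k hp, .inr ?_⟩
    rw [zpow_add_one₀ hp, mul_comm 2 k, zpow_mul, zpow_ofNat]
    ring

lemma exists_eq_norm_or_eq_p_mul_norm (hc : RootFree (toZMod c)) {d : ℚ_[p]} (hd : d ≠ 0) :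
    ∃ x y : ℚ_[p], d = x ^ 2 - (1 - 4 * c) * y ^ 2 ∨ d = p * (x ^ 2 - (1 - 4 * c) * y ^ 2) := by
  obtain ⟨v, s, -, hd⟩ := exists_eq_unit_mul_sq hd
  obtain ⟨x, y, hxy⟩ := exists_form_eq_of_isUnit hc v.isUnit
  have norm_eq : (v * s ^ 2 : ℚ_[p]) =
      (s * (x + y / 2)) ^ 2 - (1 - 4 * c) * (s * (y / 2)) ^ 2 := by
    rw [← hxy]; push_cast; ring
  refine ⟨_, _, hd.imp (·.trans norm_eq) fun h => ?_⟩
  rw [h, mul_assoc, norm_eq]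

lemma exists_eq_sq_or_eq_mul_sq (hc : RootFree (toZMod c)) {v : ℤ_[p]} (hv : IsUnit v)
    (h4 : 4 ∣ 1 - v) : ∃ s, v = s ^ 2 ∨ v = (1 - 4 * c) * s ^ 2 := by
  obtain ⟨c', hc'⟩ := h4
  obtain rfl : v = 1 - 4 * c' := by linear_combination -hc'
  have hv : 1 - 4 * toZMod c' ≠ 0 := by
    rw [← toZMod_one_sub_four_mul]
    exact toZMod_ne_zero_iff.2 hv
  by_cases free : RootFree (toZMod c')
  · obtain ⟨t, ht⟩ := hc.exists_eq_mul free
    obtain ⟨s, hs⟩ := exists_quadratic_root (1 - 4 * c) (1 - 4 * c) (c' - c) (t := t)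
      (by simp only [map_sub, map_mul, map_one, map_ofNat]; linear_combination ht)
      (by
        simp only [map_sub, map_mul, map_one, map_ofNat]
        intro h0
        refine hv ?_
        linear_combination (2 * t + 1) * h0 - 4 * ht)
    exact ⟨2 * s + 1, .inr (by linear_combination -4 * hs)⟩
  · obtain ⟨t, ht⟩ : ∃ t, t ^ 2 + t + toZMod c' = 0 := by simpa [RootFree] using free
    obtain ⟨s, hs⟩ := exists_quadratic_root 1 1 c' (t := t)
      (by rw [map_one]; linear_combination ht)
      (by
        rw [map_one]
        intro h0
        refine hv ?_
        linear_combination (2 * t + 1) * h0 - 4 * ht)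
    exact ⟨2 * s + 1, .inl (by linear_combination -4 * hs)⟩

end UnramifiedNorm

section Representation

lemma four_dvd_of_ne_two (hp : p ≠ 2) (x : ℤ_[p]) : 4 ∣ x := by
  refine IsUnit.dvd (toZMod_ne_zero_iff.1 ?_)
  have h2 : (2 : ZMod p) ≠ 0 := Ring.two_ne_zero (by rwa [ZMod.ringChar_zmod_n])
  rw [map_ofNat, show (4 : ZMod p) = 2 * 2 by norm_num]
  exact mul_ne_zero h2 h2

lemma p_dvd_iff_not_isUnit {x : ℤ_[p]} : (p : ℤ_[p]) ∣ x ↔ ¬ IsUnit x := by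
  rw [← PadicInt.norm_lt_one_iff_dvd, ← PadicInt.mem_nonunits, mem_nonunits_iff]

lemma two_dvd_iff_not_isUnit {x : ℤ_[2]} : 2 ∣ x ↔ ¬ IsUnit x :=
  mod_cast p_dvd_iff_not_isUnit (p := 2)

lemma two_dvd_one_sub_of_isUnit {v : ℤ_[2]} (hv : IsUnit v) : 2 ∣ 1 - v := by
  rw [two_dvd_iff_not_isUnit, ← toZMod_ne_zero_iff, not_not, map_sub, map_one, sub_eq_zero]
  exact (Fin.eq_one_of_ne_zero _ (toZMod_ne_zero_iff.2 hv)).symm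

lemma isUnit_add_p_mul {v : ℤ_[p]} (hv : IsUnit v) (w : ℤ_[p]) : IsUnit (v + p * w) :=
  toZMod_ne_zero_iff.1 (by simpa using toZMod_ne_zero_iff.2 hv)

lemma exists_four_dvd_one_sub_add_p_mul_sq (v w : ℤ_[p]ˣ) :
    ∃ e : ℤ_[p], 4 ∣ 1 - ((v : ℤ_[p]) + p * ((w : ℤ_[p]) * e ^ 2)) := by
  by_cases hp : p = 2
  · subst hp
    obtain ⟨k, hk⟩ := two_dvd_one_sub_of_isUnit v.isUnit
    obtain ⟨l, hl⟩ := two_dvd_one_sub_of_isUnit w.isUnit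
    by_cases unit_k : IsUnit k
    · obtain ⟨m, hm⟩ := two_dvd_one_sub_of_isUnit unit_k
      exact ⟨1, l - m, by push_cast; linear_combination hk + 2 * hl - 2 * hm⟩
    · obtain ⟨m, rfl⟩ := two_dvd_iff_not_isUnit.2 unit_k
      exact ⟨0, m, by linear_combination hk⟩
  · exact ⟨0, four_dvd_of_ne_two hp _⟩

lemma exists_four_dvd_one_sub_pureSq (v w : ℤ_[p]ˣ) :
    ∃ x y z : ℤ_[p], IsUnit (pureSq (v : ℤ_[p]) w x y z) ∧ 4 ∣ 1 - pureSq (v : ℤ_[p]) w x y z := by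
  by_cases hp : p = 2
  · subst hp
    obtain ⟨k, hk⟩ := two_dvd_one_sub_of_isUnit v.isUnit
    obtain ⟨l, hl⟩ := two_dvd_one_sub_of_isUnit w.isUnit
    have sum_eq : pureSq (v : ℤ_[2]) w 1 1 1 = 1 - 4 * (k * l) := by
      unfold pureSq
      linear_combination -(1 - w : ℤ_[2]) * hk - 2 * k * hl
    refine ⟨1, 1, 1, ?_, k * l, by rw [sum_eq]; ring⟩
    have := isUnit_add_p_mul (p := 2) isUnit_one (-2 * (k * l))
    rw [sum_eq]
    convert this using 1
    push_cast
    ring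
  · exact ⟨1, 0, 0, by simp [pureSq], four_dvd_of_ne_two hp _⟩

/-- The values of `a x² + b y² - a b z²` on `ℚ_[p]` include a unit of `ℤ_[p]` congruent to `1`
modulo `4`. For odd `p` the congruence is no condition. -/
def RepresentsOneModFour (a b : ℚ_[p]) : Prop :=
  ∃ m : ℤ_[p], IsUnit m ∧ 4 ∣ 1 - m ∧ ∃ x y z : ℚ_[p], pureSq a b x y z = m

namespace RepresentsOneModFour

lemma swap {a b : ℚ_[p]} (h : RepresentsOneModFour a b) : RepresentsOneModFour b a := by
  obtain ⟨m, unit, cong, x, y, z, hm⟩ := h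
  exact ⟨m, unit, cong, y, x, z, by rw [pureSq_swap, hm]⟩

lemma mul_sq {a b s t : ℚ_[p]} (hs : s ≠ 0) (ht : t ≠ 0) (h : RepresentsOneModFour a b) :
    RepresentsOneModFour (a * s ^ 2) (b * t ^ 2) := by
  obtain ⟨m, unit, cong, x, y, z, hm⟩ := h
  refine ⟨m, unit, cong, x / s, y / t, z / (s * t), ?_⟩
  rw [pureSq_mul_sq, ← hm]
  congr 1 <;> field_simp

lemma of_units (v w : ℤ_[p]ˣ) : RepresentsOneModFour (v : ℚ_[p]) w := by
  obtain ⟨x, y, z, unit, cong⟩ := exists_four_dvd_one_sub_pureSq v w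
  exact ⟨_, unit, cong, x, y, z, by simp [pureSq]⟩

lemma of_unit_of_p_mul_unit (v w : ℤ_[p]ˣ) : RepresentsOneModFour (v : ℚ_[p]) (p * w) := by
  obtain ⟨e, cong⟩ := exists_four_dvd_one_sub_add_p_mul_sq v w
  refine ⟨_, isUnit_add_p_mul v.isUnit _, cong, 1, e, 0, ?_⟩
  unfold pureSq; push_cast; ring

lemma of_p_mul_units (v w : ℤ_[p]ˣ) : RepresentsOneModFour (p * v : ℚ_[p]) (p * w) := by
  have hp : (p : ℚ_[p]) ≠ 0 := by exact_mod_cast (Fact.out : p.Prime).ne_zero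
  obtain ⟨e, cong⟩ := exists_four_dvd_one_sub_add_p_mul_sq (-(v * w)) v
  refine ⟨_, isUnit_add_p_mul (-(v * w)).isUnit _, cong, e, 0, 1 / p, ?_⟩
  unfold pureSq
  push_cast
  field_simp
  ring

lemma of_ne_zero {a b : ℚ_[p]} (ha : a ≠ 0) (hb : b ≠ 0) : RepresentsOneModFour a b := by
  obtain ⟨v, s, hs, rfl | rfl⟩ := exists_eq_unit_mul_sq ha <;>
    obtain ⟨w, t, ht, rfl | rfl⟩ := exists_eq_unit_mul_sq hb <;>
    apply mul_sq hs ht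
  · exact of_units v w
  · exact of_unit_of_p_mul_unit v w
  · exact (of_unit_of_p_mul_unit w v).swap
  · exact of_p_mul_units v w

end RepresentsOneModFour

lemma exists_pureSq_eq_one_or_eq {c : ℤ_[p]} (hc : RootFree (toZMod c)) {a b : ℚ_[p]}
    (ha : a ≠ 0) (hb : b ≠ 0) :
    ∃ x y z : ℚ_[p], pureSq a b x y z = 1 ∨ pureSq a b x y z = 1 - 4 * c := by
  obtain ⟨m, unit, cong, x, y, z, hm⟩ := RepresentsOneModFour.of_ne_zero ha hb
  obtain ⟨s, hs⟩ := exists_eq_sq_or_eq_mul_sq hc unit cong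
  have s_ne_zero : (s : ℚ_[p]) ≠ 0 := by
    rw [Ne, PadicInt.coe_eq_zero]
    rintro rfl
    exact unit.ne_zero (by simpa using hs)
  refine ⟨(s : ℚ_[p])⁻¹ * x, (s : ℚ_[p])⁻¹ * y, (s : ℚ_[p])⁻¹ * z, ?_⟩
  rw [pureSq_smul, hm]
  refine hs.imp (fun hs => ?_) fun hs => ?_
  · rw [hs, PadicInt.coe_pow, ← mul_pow, inv_mul_cancel₀ s_ne_zero, one_pow]
  · rw [hs, PadicInt.coe_mul, coe_one_sub_four_mul, PadicInt.coe_pow]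
    field_simp

end Representation

lemma splits_or_nonempty_algEquiv {c : ℤ_[p]} (hc : RootFree (toZMod c)) {a b : ℚ_[p]}
    (ha : a ≠ 0) (hb : b ≠ 0) :
    Nonempty (ℍ[ℚ_[p],a,b] ≃ₐ[ℚ_[p]] Matrix (Fin 2) (Fin 2) ℚ_[p]) ∨
      Nonempty (ℍ[ℚ_[p],a,b] ≃ₐ[ℚ_[p]] ℍ[ℚ_[p],1 - 4 * (c : ℚ_[p]),(p : ℚ_[p])]) := by
  have hp : (p : ℚ_[p]) ≠ 0 := by exact_mod_cast (Fact.out : p.Prime).ne_zero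
  have hu := coe_one_sub_four_mul_ne_zero hc
  obtain ⟨x, y, z, one | unramified⟩ := exists_pureSq_eq_one_or_eq hc ha hb
  · exact .inl (nonempty_algEquiv_matrix_of_pureSq_eq_one ha hb one)
  obtain ⟨d, hd, ⟨e⟩⟩ := exists_algEquiv_pureSq ha hb (unramified ▸ hu)
  rw [unramified] at e
  obtain ⟨x, y, rfl | rfl⟩ := exists_eq_norm_or_eq_p_mul_norm hc hd
  · exact .inl ((nonempty_algEquiv_matrix_of_norm hu hd).map e.trans)
  · exact .inr ((nonempty_algEquiv_mul_norm hu hp (right_ne_zero_of_mul hd)).map (e.trans ·.symm))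

end Padic

end PadicQuaternion

theorem stmt_3 (p : ℕ) [Fact p.Prime] :
    ∃ a₀ b₀ : ℚ_[p], a₀ ≠ 0 ∧ b₀ ≠ 0 ∧
      IsDivisionRingPred ℍ[ℚ_[p], a₀, b₀] ∧
      ¬ Nonempty (ℍ[ℚ_[p], a₀, b₀] ≃ₐ[ℚ_[p]] Matrix (Fin 2) (Fin 2) ℚ_[p]) ∧
      ∀ a b : ℚ_[p], a ≠ 0 → b ≠ 0 →
        Nonempty (ℍ[ℚ_[p], a, b] ≃ₐ[ℚ_[p]] Matrix (Fin 2) (Fin 2) ℚ_[p]) ∨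
        Nonempty (ℍ[ℚ_[p], a, b] ≃ₐ[ℚ_[p]] ℍ[ℚ_[p], a₀, b₀]) := by
  obtain ⟨c₀, hc₀⟩ := PadicQuaternion.exists_rootFree (ZMod p)
  obtain ⟨c, rfl⟩ := ZMod.ringHom_surjective PadicInt.toZMod c₀
  have hu := PadicQuaternion.coe_one_sub_four_mul_ne_zero hc₀
  have hp : (p : ℚ_[p]) ≠ 0 := by exact_mod_cast (Fact.out : p.Prime).ne_zero
  have division : IsDivisionRingPred ℍ[ℚ_[p], 1 - 4 * (c : ℚ_[p]), (p : ℚ_[p])] :=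
    PadicQuaternion.isDivisionRingPred_of_not_norm hu (PadicQuaternion.sq_sub_mul_sq_ne_p hc₀)
  refine ⟨1 - 4 * c, p, hu, hp, division, ?_, fun a b ha hb =>
    PadicQuaternion.splits_or_nonempty_algEquiv hc₀ ha hb⟩
  rintro ⟨e⟩
  exact (PadicQuaternion.isEmpty_ringEquiv_matrix division (Fin 2) ℚ_[p]).false e.toRingEquiv
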